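/- With the discrete distance d(s,s') = 1_{s ≠ s'}, the optimal value of the skewed Kantorovich linear program (max over x ∈ [0,1]^S of Σ_s (ω(s) - α ω'(s)) x_s subject to x_s - α x_{s'} ≤ d(s,s') for all s, s'), maximized symmetrically over the two orderings of ω, ω', equals the skewed total variation distance tv_α(ω, ω') = max over subsets E ⊆ S of Δ_α(ω(E), ω'(E)), for α ≥ 1 and probability distributions ω, ω' on a finite set S. -/

import Mathlib

open Finset

/-- The skew function Δ_α(x,y) = max{x - αy, y - αx, 0}. -/
def skew (α x y : ℝ) : ℝ := max (x - α * y) (max (y - α * x) 0)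

/-- Value of the skewed Kantorovich linear program for distance `d`,
objective `Σ_s (ω(s) - α ω'(s)) x_s`, over feasible `x ∈ [0,1]^S` with
`x_s - α x_{s'} ≤ d(s,s')`. -/
noncomputable def lpValue {S : Type*} [Fintype S] (α : ℝ) (d : S → S → ℝ)
    (ω ω' : S → ℝ) : ℝ :=
  sSup { v : ℝ | ∃ x : S → ℝ, (∀ s, 0 ≤ x s ∧ x s ≤ 1) ∧
    (∀ s s', x s - α * x s' ≤ d s s') ∧ v = ∑ s, (ω s - α * ω' s) * x s }

/-- The skewed Kantorovich distance: the larger of the two LP values obtained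
by the two orderings of the distributions. -/
noncomputable def kantSkew {S : Type*} [Fintype S] (α : ℝ) (d : S → S → ℝ)
    (ω ω' : S → ℝ) : ℝ :=
  max (lpValue α d ω ω') (lpValue α d ω' ω)

/-!
For `α ≥ 1` every point of the box `[0,1]^S` satisfies the constraints imposed by the discrete
distance, so the program maximizes a linear functional over the box. Its optimum is the sum of the
positive parts of the coefficients, attained at the indicator of the event where the coefficients
are nonnegative. That event also maximizes `ω(E) - α ω'(E)`, and the two orderings of `ω` and `ω'`
give the two terms of the skew function.
-/

section PosPart

variable {ι : Type*} [Fintype ι]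

theorem sum_filter_nonneg_eq_sum_posPart {M : Type*} [AddCommGroup M] [LinearOrder M]
    (f : ι → M) : ∑ i with 0 ≤ f i, f i = ∑ i, (f i)⁺ := by
  rw [sum_filter]
  refine sum_congr rfl fun i _ => ?_
  split_ifs with hi
  · exact (posPart_of_nonneg hi).symm
  · exact (posPart_of_nonpos (not_le.mp hi).le).symm

theorem isGreatest_range_sum_finset {M : Type*} [AddCommGroup M] [LinearOrder M]
    [IsOrderedAddMonoid M] (f : ι → M) :
    IsGreatest (Set.range fun E : Finset ι => ∑ i ∈ E, f i) (∑ i, (f i)⁺) := by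
  refine ⟨⟨_, sum_filter_nonneg_eq_sum_posPart f⟩, ?_⟩
  rintro _ ⟨E, rfl⟩
  calc
    ∑ i ∈ E, f i ≤ ∑ i ∈ E, (f i)⁺ := sum_le_sum fun i _ => le_posPart (f i)
    _ ≤ ∑ i, (f i)⁺ := sum_le_univ_sum_of_nonneg fun i => posPart_nonneg (f i)

theorem isGreatest_image_sum_mul_Icc {R : Type*} [Ring R] [LinearOrder R] [IsOrderedRing R]
    (f : ι → R) :
    IsGreatest ((fun x : ι → R => ∑ i, f i * x i) '' Set.Icc 0 1) (∑ i, (f i)⁺) := by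
  constructor
  · refine ⟨fun i => if 0 ≤ f i then 1 else 0, ⟨fun i => ?_, fun i => ?_⟩, ?_⟩
    · dsimp only [Pi.zero_apply]
      split_ifs <;> simp
    · dsimp only [Pi.one_apply]
      split_ifs <;> simp
    · simp only [mul_ite, mul_one, mul_zero, ← sum_filter, sum_filter_nonneg_eq_sum_posPart]
  · rintro _ ⟨x, ⟨hx0, hx1⟩, rfl⟩
    refine sum_le_sum fun i _ => ?_
    calc
      f i * x i ≤ (f i)⁺ * x i := mul_le_mul_of_nonneg_right (le_posPart (f i)) (hx0 i)
      _ ≤ (f i)⁺ := mul_le_of_le_one_right (posPart_nonneg (f i)) (hx1 i)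

end PosPart

theorem sub_mul_le_of_mem_Icc {S R : Type*} [Ring R] [PartialOrder R] [IsOrderedRing R] {α : R}
    (hα : 1 ≤ α) {d : S → S → R} (hd_self : ∀ s, 0 ≤ d s s)
    (hd_ne : ∀ s s', s ≠ s' → 1 ≤ d s s') {x : S → R} (hx : x ∈ Set.Icc 0 1) (s s' : S) :
    x s - α * x s' ≤ d s s' := by
  have hmul : x s' ≤ α * x s' := le_mul_of_one_le_left (hx.1 s') hα
  rcases eq_or_ne s s' with rfl | hne
  · exact (sub_nonpos.mpr hmul).trans (hd_self s)
  · calc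
      x s - α * x s' ≤ x s := sub_le_self _ ((hx.1 s').trans hmul)
      _ ≤ 1 := hx.2 s
      _ ≤ d s s' := hd_ne s s' hne

section Skew

variable {S : Type*} [Fintype S] {α : ℝ} {d : S → S → ℝ}

theorem lpValue_eq_sum_posPart (hα : 1 ≤ α) (hd_self : ∀ s, 0 ≤ d s s)
    (hd_ne : ∀ s s', s ≠ s' → 1 ≤ d s s') (ω ω' : S → ℝ) :
    lpValue α d ω ω' = ∑ s, (ω s - α * ω' s)⁺ := by
  rw [← (isGreatest_image_sum_mul_Icc fun s => ω s - α * ω' s).csSup_eq, lpValue]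
  congr 1
  ext v
  constructor
  · rintro ⟨x, hx, -, rfl⟩
    exact ⟨x, ⟨fun s => (hx s).1, fun s => (hx s).2⟩, rfl⟩
  · rintro ⟨x, hx, rfl⟩
    exact ⟨x, fun s => ⟨hx.1 s, hx.2 s⟩, sub_mul_le_of_mem_Icc hα hd_self hd_ne hx, rfl⟩

theorem isGreatest_range_sum_sub_mul_sum (α : ℝ) (ω ω' : S → ℝ) :
    IsGreatest (Set.range fun E : Finset S => ∑ s ∈ E, ω s - α * ∑ s ∈ E, ω' s)
      (∑ s, (ω s - α * ω' s)⁺) := by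
  simpa only [sum_sub_distrib, ← mul_sum] using
    isGreatest_range_sum_finset fun s => ω s - α * ω' s

theorem iSup_skew_sum (α : ℝ) (ω ω' : S → ℝ) :
    ⨆ E : Finset S, skew α (∑ s ∈ E, ω s) (∑ s ∈ E, ω' s) =
      max (∑ s, (ω s - α * ω' s)⁺) (∑ s, (ω' s - α * ω s)⁺) := by
  obtain ⟨⟨E, hE⟩, hle⟩ := isGreatest_range_sum_sub_mul_sum α ω ω'
  obtain ⟨⟨E', hE'⟩, hle'⟩ := isGreatest_range_sum_sub_mul_sum α ω' ω
  have hbdd : BddAbove (Set.range fun E : Finset S => skew α (∑ s ∈ E, ω s) (∑ s ∈ E, ω' s)) :=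
    (Set.finite_range _).bddAbove
  apply le_antisymm
  · refine ciSup_le fun F => max_le ?_ (max_le ?_ ?_)
    · exact le_max_of_le_left (hle ⟨F, rfl⟩)
    · exact le_max_of_le_right (hle' ⟨F, rfl⟩)
    · exact le_max_of_le_left (sum_nonneg fun s _ => posPart_nonneg _)
  · refine max_le (le_ciSup_of_le hbdd E ?_) (le_ciSup_of_le hbdd E' ?_)
    · exact le_max_of_le_left hE.ge
    · exact le_max_of_le_right (le_max_of_le_left hE'.ge)

theorem kantSkew_discrete_eq_tvSkew_general (hα : 1 ≤ α) (hd_self : ∀ s, 0 ≤ d s s)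
    (hd_ne : ∀ s s', s ≠ s' → 1 ≤ d s s') (ω ω' : S → ℝ) :
    kantSkew α d ω ω' = ⨆ E : Finset S, skew α (∑ s ∈ E, ω s) (∑ s ∈ E, ω' s) := by
  rw [kantSkew, lpValue_eq_sum_posPart hα hd_self hd_ne,
    lpValue_eq_sum_posPart hα hd_self hd_ne, iSup_skew_sum]

end Skew

theorem kantSkew_discrete_eq_tvSkew {S : Type*} [Fintype S] [DecidableEq S]
    (ω ω' : S → ℝ) (hω0 : ∀ s, 0 ≤ ω s) (hω'0 : ∀ s, 0 ≤ ω' s)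
    (hω1 : ∑ s, ω s = 1) (hω'1 : ∑ s, ω' s = 1)
    (α : ℝ) (hα : 1 ≤ α) :
    kantSkew α (fun s s' => if s ≠ s' then (1:ℝ) else 0) ω ω' =
      ⨆ E : Finset S, skew α (∑ s ∈ E, ω s) (∑ s ∈ E, ω' s) :=
  kantSkew_discrete_eq_tvSkew_general hα (fun s => by simp) (fun s s' hne => by simp [hne]) ω ω'
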